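/- Let (p_n)_{n≥1} be a Schauder decomposition of a complex Banach space X with K := sup_{N≥1} ‖P_N‖, and set Q_N := I − P_N. Define a_n = (n!)^3 for n ≥ 1, let B = M_b ∈ B(X) be the multiplier operator associated with b_n = a_n^{-1} = (n!)^{-3}, and set t_N = N·(N!)^3 for N ≥ 1. Then for every N ≥ 1, ‖exp(−t_N B) − Q_N‖ ≤ 2(1+K)(e^{−N} + N^{−2}); in particular the series ∑_{N=1}^∞ ‖exp(−t_N B) − Q_N‖ converges. -/

import Mathlib

open Filter Topology NormedSpace

/-- Average over all sign vectors `(ε_1,…,ε_k) ∈ {−1,1}^k` of `‖∑_j ε_j v_j‖`. -/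
noncomputable def signAvg {X : Type*} [NormedAddCommGroup X] [NormedSpace ℂ X]
    (k : ℕ) (v : Fin k → X) : ℝ :=
  (2 ^ k : ℝ)⁻¹ * ∑ ε : Fin k → Bool, ‖∑ j : Fin k, (if ε j then (1 : ℝ) else -1) • v j‖

/-- A set of bounded operators on `X` is `R`-bounded. -/
def IsRBounded {X : Type*} [NormedAddCommGroup X] [NormedSpace ℂ X]
    (F : Set (X →L[ℂ] X)) : Prop :=
  ∃ C : ℝ, 0 ≤ C ∧ ∀ (k : ℕ) (T : Fin k → X →L[ℂ] X) (x : Fin k → X),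
    (∀ j, T j ∈ F) → signAvg k (fun j => (T j) (x j)) ≤ C * signAvg k x

/-- `(p n)` is a Schauder decomposition of `X`: the `p n` are pairwise "orthogonal"
bounded projections whose partial sums converge pointwise to the identity.
(Indexing starts at `0`, corresponding to `n = 1` in the classical notation.) -/
def IsSchauderDecomposition {X : Type*} [NormedAddCommGroup X] [NormedSpace ℂ X]
    (p : ℕ → X →L[ℂ] X) : Prop :=
  (∀ n, (p n).comp (p n) = p n) ∧
  (∀ m n, m ≠ n → (p m).comp (p n) = 0) ∧
  (∀ x : X, Tendsto (fun N => ∑ n ∈ Finset.range N, p n x) atTop (nhds x))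

/-- The partial sum projection `P_N = ∑_{n<N} p_n`. -/
noncomputable def partialSum {X : Type*} [NormedAddCommGroup X] [NormedSpace ℂ X]
    (p : ℕ → X →L[ℂ] X) (N : ℕ) : X →L[ℂ] X :=
  ∑ n ∈ Finset.range N, p n

/-- The sequence `a_n = (n!)³` (here `aSeq N = ((N+1)!)³`, `1`-based). -/
noncomputable def aSeq (N : ℕ) : ℝ := (Nat.factorial (N + 1) : ℝ) ^ 3

/-- The times `t_N = N (N!)³` (here `tSeq N = (N+1)((N+1)!)³`, `1`-based). -/
noncomputable def tSeq (N : ℕ) : ℝ := (N + 1 : ℝ) * (Nat.factorial (N + 1) : ℝ) ^ 3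

/-!
Since `B (p n x) = b n • p n x`, the operator `exp (-t B) - Q_N` multiplies `p n` by
`d n = exp (-t b n) - 1_{n > N}`. Abel summation bounds the norm of such a multiplier by `K` times
the total variation of `d` on its way to `0`. As `exp (-t b n)` increases in `n`, `d` climbs to
`exp (-t b N)`, drops to `exp (-t b (N+1)) - 1` and climbs back towards `0`, so this variation is
at most `2 (exp (-t b N) + 1 - exp (-t b (N+1))) ≤ 2 (exp (-t b N) + t b (N+1))`. The times `t_N`
are chosen so that `t_N / a_N = N` while `t_N / a_{N+1} ≤ N⁻²`.
-/

section Abel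

variable {𝕜 : Type*} [SeminormedRing 𝕜]

/-- The variation of `c 0, …, c L, 0`, i.e. of `c` stopped after index `L`. It is the constant
in Abel's estimate of `∑ n ≤ L, c n • v n` by the partial sums of `v`. -/
noncomputable def abelVariation (c : ℕ → 𝕜) (L : ℕ) : ℝ :=
  ‖c L‖ + ∑ n ∈ Finset.range L, ‖c (n + 1) - c n‖

theorem abelVariation_nonneg (c : ℕ → 𝕜) (L : ℕ) : 0 ≤ abelVariation c L := by
  unfold abelVariation
  positivity

theorem norm_sum_smul_le_abelVariation_mul {X : Type*} [SeminormedAddCommGroup X] [Module 𝕜 X]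
    [IsBoundedSMul 𝕜 X] (c : ℕ → 𝕜) {v : ℕ → X} {C : ℝ}
    (hv : ∀ n, ‖∑ i ∈ Finset.range (n + 1), v i‖ ≤ C) (L : ℕ) :
    ‖∑ n ∈ Finset.range (L + 1), c n • v n‖ ≤ abelVariation c L * C := by
  have norm_smul_sum_le (a : 𝕜) (n : ℕ) :
      ‖a • ∑ i ∈ Finset.range (n + 1), v i‖ ≤ ‖a‖ * C :=
    (norm_smul_le _ _).trans (mul_le_mul_of_nonneg_left (hv n) (norm_nonneg a))
  rw [Finset.sum_range_by_parts, Nat.add_sub_cancel, abelVariation, add_mul, Finset.sum_mul]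
  exact norm_sub_le_of_le (norm_smul_sum_le _ _)
    (norm_sum_le_of_le _ fun n _ => norm_smul_sum_le _ n)

end Abel

theorem abelVariation_ofReal (𝕜 : Type*) [RCLike 𝕜] (c : ℕ → ℝ) (L : ℕ) :
    abelVariation (fun n => (c n : 𝕜)) L = abelVariation c L := by
  simp only [abelVariation, ← RCLike.ofReal_sub, RCLike.norm_ofReal, Real.norm_eq_abs]

theorem abelVariation_sub_step_le {e : ℕ → ℝ} (he : Monotone e) (he_zero : 0 ≤ e 0)
    (he_one : ∀ n, e n ≤ 1) {N L : ℕ} (hNL : N < L) :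
    abelVariation (fun n => e n - if n < N + 1 then 0 else 1) L ≤
      2 * (e N + (1 - e (N + 1))) := by
  have norm_last : ‖e L - if L < N + 1 then 0 else 1‖ = 1 - e L := by
    rw [if_neg (by lia), Real.norm_of_nonpos (sub_nonpos.2 (he_one L)), neg_sub]
  have norm_diff (n : ℕ) :
      ‖(e (n + 1) - if n + 1 < N + 1 then 0 else 1) - (e n - if n < N + 1 then 0 else 1)‖ =
        (e (n + 1) - e n) + if N = n then 1 - 2 * (e (N + 1) - e N) else 0 := by
    have := he n.le_succ
    rcases lt_trichotomy n N with h | rfl | h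
    · rw [if_pos (by lia), if_pos (by lia), if_neg h.ne', Real.norm_of_nonneg (by linarith)]
      ring
    · rw [if_neg (by lia), if_pos (by lia), if_pos rfl,
        Real.norm_of_nonpos (by linarith [he_one (n + 1), he n.zero_le])]
      ring
    · rw [if_neg (by lia), if_neg (by lia), if_neg h.ne, Real.norm_of_nonneg (by linarith)]
      ring
  calc abelVariation (fun n => e n - if n < N + 1 then 0 else 1) L
      = (1 - e L) + ((e L - e 0) + (1 - 2 * (e (N + 1) - e N))) := by
        simp only [abelVariation, norm_last, norm_diff, Finset.sum_add_distrib,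
          Finset.sum_range_sub, Finset.sum_ite_eq, Finset.mem_range, hNL, if_true]
    _ ≤ 2 * (e N + (1 - e (N + 1))) := by linarith

theorem exp_apply_of_apply_eq_smul {𝕜 X : Type*} [RCLike 𝕜] [NormedAddCommGroup X]
    [NormedSpace 𝕜 X] [CompleteSpace X] {T : X →L[𝕜] X} {c : 𝕜} {y : X} (h : T y = c • y) :
    exp T y = exp c • y := by
  have pow_apply (n : ℕ) : (T ^ n) y = c ^ n • y := by
    induction n with
    | zero => simp
    | succ n ih => rw [pow_succ, mul_apply_eq_comp, h, map_smul, ih, smul_smul, pow_succ']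
  have series_apply : HasSum (fun n : ℕ => ((n.factorial : 𝕜)⁻¹ • T ^ n) y) (exp T y) :=
    (exp_series_hasSum_exp' (𝕂 := 𝕜) T).mapL (ContinuousLinearMap.apply 𝕜 X y)
  have series_smul : HasSum (fun n : ℕ => ((n.factorial : 𝕜)⁻¹ • c ^ n) • y) (exp c • y) :=
    (exp_series_hasSum_exp' (𝕂 := 𝕜) c).smul_const y
  simp only [smul_apply, pow_apply] at series_apply
  simp only [smul_assoc] at series_smul
  exact series_apply.unique series_smul

section Multiplier

variable {X : Type*} [NormedAddCommGroup X] [NormedSpace ℂ X] {p : ℕ → X →L[ℂ] X}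

/-- `T` is the multiplier `M_c` of the family `p`, that is, `T x = ∑ c n • p n x` for every `x`,
the series being the limit of its partial sums. -/
def IsMultiplier (p : ℕ → X →L[ℂ] X) (c : ℕ → ℂ) (T : X →L[ℂ] X) : Prop :=
  ∀ x, Tendsto (fun N => ∑ n ∈ Finset.range N, c n • p n x) atTop (𝓝 (T x))

theorem IsSchauderDecomposition.apply_apply (hp : IsSchauderDecomposition p) (m n : ℕ) (x : X) :
    p m (p n x) = if m = n then p n x else 0 := by
  split_ifs with h
  · subst h
    exact DFunLike.congr_fun (hp.1 m) x
  · exact DFunLike.congr_fun (hp.2.1 m n h) x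

theorem IsSchauderDecomposition.isMultiplier_iff (hp : IsSchauderDecomposition p) {c : ℕ → ℂ}
    {T : X →L[ℂ] X} : IsMultiplier p c T ↔ ∀ n x, T (p n x) = c n • p n x := by
  refine ⟨fun hT n x => tendsto_nhds_unique (hT (p n x)) ?_, fun hT x => ?_⟩
  · refine tendsto_const_nhds.congr' ?_
    filter_upwards [eventually_gt_atTop n] with N hN
    simp [hp.apply_apply, hN]
  · simpa only [Function.comp_def, map_sum, hT] using
      (T.continuous.tendsto x).comp (hp.2.2 x)

theorem IsSchauderDecomposition.isMultiplier_one_sub_partialSum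
    (hp : IsSchauderDecomposition p) (N : ℕ) :
    IsMultiplier p (fun n => if n < N then 0 else 1) (1 - partialSum p N) := by
  refine hp.isMultiplier_iff.2 fun n x => ?_
  have partialSum_apply : partialSum p N (p n x) = if n < N then p n x else 0 := by
    simp [partialSum, hp.apply_apply]
  rw [sub_apply, partialSum_apply]
  split_ifs <;> simp

namespace IsMultiplier

variable {c d : ℕ → ℂ} {S T : X →L[ℂ] X}

theorem sub (hS : IsMultiplier p c S) (hT : IsMultiplier p d T) :
    IsMultiplier p (fun n => c n - d n) (S - T) := fun x => by
  simpa only [sub_smul, Finset.sum_sub_distrib, sub_apply] using (hS x).sub (hT x)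

theorem const_smul (hT : IsMultiplier p c T) (a : ℂ) :
    IsMultiplier p (fun n => a * c n) (a • T) := fun x => by
  simpa only [mul_smul, Finset.smul_sum, smul_apply] using (hT x).const_smul a

protected theorem exp [CompleteSpace X] (hp : IsSchauderDecomposition p)
    (hT : IsMultiplier p c T) : IsMultiplier p (fun n => Complex.exp (c n)) (exp T) :=
  hp.isMultiplier_iff.2 fun n x => by
    rw [Complex.exp_eq_exp_ℂ]
    exact exp_apply_of_apply_eq_smul (hp.isMultiplier_iff.1 hT n x)

theorem opNorm_le (hT : IsMultiplier p c T) {K V : ℝ} (hK : ∀ N, ‖partialSum p (N + 1)‖ ≤ K)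
    (hV : ∀ᶠ L in atTop, abelVariation c L ≤ V) : ‖T‖ ≤ V * K := by
  have hK_nonneg : 0 ≤ K := (norm_nonneg _).trans (hK 0)
  have hV_nonneg : 0 ≤ V := by
    obtain ⟨L, hL⟩ := hV.exists
    exact (abelVariation_nonneg c L).trans hL
  refine T.opNorm_le_bound (mul_nonneg hV_nonneg hK_nonneg) fun x => ?_
  have norm_partialSum_le (n : ℕ) : ‖∑ i ∈ Finset.range (n + 1), p i x‖ ≤ K * ‖x‖ := by
    simpa only [partialSum, sum_apply] using
      (partialSum p (n + 1)).le_of_opNorm_le (hK n) x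
  refine le_of_tendsto ((hT x).comp (tendsto_add_atTop_nat 1)).norm ?_
  filter_upwards [hV] with L hL
  calc ‖∑ n ∈ Finset.range (L + 1), c n • p n x‖
      ≤ abelVariation c L * (K * ‖x‖) :=
        norm_sum_smul_le_abelVariation_mul c norm_partialSum_le L
    _ ≤ V * K * ‖x‖ := by
        rw [mul_assoc]
        gcongr

theorem norm_exp_sub_one_sub_partialSum_le [CompleteSpace X] (hp : IsSchauderDecomposition p)
    {K : ℝ} (hK : ∀ N, ‖partialSum p (N + 1)‖ ≤ K) {b : ℕ → ℝ} (hb : Antitone b)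
    (hb_nonneg : ∀ n, 0 ≤ b n) {B : X →L[ℂ] X} (hB : IsMultiplier p (fun n => (b n : ℂ)) B)
    {t : ℝ} (ht : 0 ≤ t) (N : ℕ) :
    ‖exp (-((t : ℂ) • B)) - (1 - partialSum p (N + 1))‖ ≤
      2 * K * (Real.exp (-(t * b N)) + t * b (N + 1)) := by
  have hK_nonneg : 0 ≤ K := (norm_nonneg _).trans (hK 0)
  set e : ℕ → ℝ := fun n => Real.exp (-(t * b n)) with he
  have he_mono : Monotone e := fun m n hmn =>
    Real.exp_le_exp.2 (neg_le_neg (mul_le_mul_of_nonneg_left (hb hmn) ht))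
  have he_one (n : ℕ) : e n ≤ 1 :=
    Real.exp_le_one_iff.2 (neg_nonpos.2 (mul_nonneg ht (hb_nonneg n)))
  have isMultiplier_diff : IsMultiplier p
      (fun n => ((e n - if n < N + 1 then 0 else 1 : ℝ) : ℂ))
      (exp (-((t : ℂ) • B)) - (1 - partialSum p (N + 1))) := by
    rw [← neg_smul]
    convert ((hB.const_smul _).exp hp).sub (hp.isMultiplier_one_sub_partialSum (N + 1))
      using 2 with n
    split_ifs <;> simp [he]
  calc ‖exp (-((t : ℂ) • B)) - (1 - partialSum p (N + 1))‖
      ≤ 2 * (e N + (1 - e (N + 1))) * K := by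
        refine isMultiplier_diff.opNorm_le hK ?_
        filter_upwards [eventually_gt_atTop N] with L hL
        exact (abelVariation_ofReal ℂ _ L).trans_le
          (abelVariation_sub_step_le he_mono (Real.exp_pos _).le he_one hL)
    _ = 2 * K * (e N + (1 - e (N + 1))) := by ring
    _ ≤ 2 * K * (e N + t * b (N + 1)) := by
        gcongr
        linarith [Real.one_sub_le_exp_neg (t * b (N + 1))]

end IsMultiplier

end Multiplier

theorem aSeq_pos (N : ℕ) : 0 < aSeq N := by
  unfold aSeq
  positivity

theorem monotone_aSeq : Monotone aSeq := fun m n hmn => by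
  unfold aSeq
  gcongr

theorem antitone_inv_aSeq : Antitone fun N => (aSeq N)⁻¹ := fun m _ hmn =>
  inv_anti₀ (aSeq_pos m) (monotone_aSeq hmn)

theorem aSeq_succ (N : ℕ) : aSeq (N + 1) = (N + 2 : ℝ) ^ 3 * aSeq N := by
  rw [aSeq, Nat.factorial_succ (N + 1), aSeq]
  push_cast
  ring

theorem tSeq_eq_mul_aSeq (N : ℕ) : tSeq N = (N + 1) * aSeq N := rfl

theorem tSeq_nonneg (N : ℕ) : 0 ≤ tSeq N := by
  unfold tSeq
  positivity

theorem tSeq_mul_inv_aSeq (N : ℕ) : tSeq N * (aSeq N)⁻¹ = N + 1 :=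
  mul_inv_cancel_right₀ (aSeq_pos N).ne' _

theorem tSeq_mul_inv_aSeq_succ_le (N : ℕ) :
    tSeq N * (aSeq (N + 1))⁻¹ ≤ ((N + 1 : ℝ) ^ 2)⁻¹ := by
  have := (aSeq_pos N).ne'
  calc tSeq N * (aSeq (N + 1))⁻¹ = (N + 1) / (N + 2 : ℝ) ^ 3 := by
        rw [tSeq_eq_mul_aSeq, aSeq_succ]
        field_simp
    _ ≤ (N + 1) / (N + 1 : ℝ) ^ 3 := by
        gcongr
        norm_num
    _ = ((N + 1 : ℝ) ^ 2)⁻¹ := by field_simp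

theorem summable_exp_neg_add_inv_sq :
    Summable fun N : ℕ => Real.exp (-(N + 1 : ℝ)) + ((N + 1 : ℝ) ^ 2)⁻¹ := by
  have summable_shift := (summable_nat_add_iff 1).2
    (Real.summable_exp_neg_nat.add (Real.summable_nat_pow_inv.2 one_lt_two))
  simpa only [Nat.cast_add, Nat.cast_one] using summable_shift

/-- For `a_n = (n!)³`, `b_n = a_n⁻¹`, `B = M_b` and `t_N = N (N!)³`, one has
`‖exp(−t_N B) − Q_N‖ ≤ 2(1+K)(e^{−N} + N^{−2})`, and the series
`∑_N ‖exp(−t_N B) − Q_N‖` converges. (Index `N + 1` ↔ classical `N ≥ 1`.) -/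
theorem statement10 {X : Type*} [NormedAddCommGroup X] [NormedSpace ℂ X] [CompleteSpace X]
    (p : ℕ → X →L[ℂ] X) (hp : IsSchauderDecomposition p)
    (K : ℝ) (hK : ∀ N : ℕ, ‖partialSum p (N + 1)‖ ≤ K)
    (B : X →L[ℂ] X)
    (hB : ∀ x : X, Tendsto (fun N => ∑ n ∈ Finset.range N, (((aSeq n)⁻¹ : ℝ) : ℂ) • p n x)
      atTop (nhds (B x))) :
    (∀ N : ℕ,
      ‖exp (-((tSeq N : ℂ) • B)) - (1 - partialSum p (N + 1))‖ ≤
        2 * (1 + K) * (Real.exp (-(N + 1 : ℝ)) + ((N + 1 : ℝ) ^ 2)⁻¹)) ∧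
    Summable (fun N : ℕ => ‖exp (-((tSeq N : ℂ) • B)) - (1 - partialSum p (N + 1))‖) := by
  have norm_le (N : ℕ) : ‖exp (-((tSeq N : ℂ) • B)) - (1 - partialSum p (N + 1))‖ ≤
      2 * (1 + K) * (Real.exp (-(N + 1 : ℝ)) + ((N + 1 : ℝ) ^ 2)⁻¹) := by
    have hK_nonneg : 0 ≤ K := (norm_nonneg _).trans (hK 0)
    calc ‖exp (-((tSeq N : ℂ) • B)) - (1 - partialSum p (N + 1))‖
        ≤ 2 * K * (Real.exp (-(tSeq N * (aSeq N)⁻¹)) + tSeq N * (aSeq (N + 1))⁻¹) :=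
          IsMultiplier.norm_exp_sub_one_sub_partialSum_le hp hK antitone_inv_aSeq
            (fun n => (inv_pos.2 (aSeq_pos n)).le) hB (tSeq_nonneg N) N
      _ ≤ 2 * K * (Real.exp (-(N + 1 : ℝ)) + ((N + 1 : ℝ) ^ 2)⁻¹) := by
          rw [tSeq_mul_inv_aSeq]
          gcongr
          exact tSeq_mul_inv_aSeq_succ_le N
      _ ≤ 2 * (1 + K) * (Real.exp (-(N + 1 : ℝ)) + ((N + 1 : ℝ) ^ 2)⁻¹) := by
          gcongr
          linarith
  exact ⟨norm_le, .of_nonneg_of_le (fun _ => norm_nonneg _) norm_le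
    (summable_exp_neg_add_inv_sq.mul_left _)⟩
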